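/- arXiv:2502.16264 — 4 statements merged into one kernel-verified Lean document; each statement's English description precedes it below -/
import Mathlib

section
/- Let d ≥ 2 be an integer and fix integers ℓ, k ≥ 0. For every real r > 0, the radial Zernike polynomial R_{ℓ,k} satisfies the singular Sturm–Liouville equation d/dr[ r^{d−1}(1−r²) · R_{ℓ,k}′(r) ] − ℓ(ℓ+d−2) r^{d−3} R_{ℓ,k}(r) = −(ℓ+2k)(ℓ+2k+d) · r^{d−1} R_{ℓ,k}(r); that is, R_{ℓ,k} is an eigenfunction of the radial Zernike Sturm–Liouville operator with eigenvalue μ_{ℓ,k} = (ℓ+2k)(ℓ+2k+d). -/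
/-!
Away from the origin the radial Zernike operator `L f = (r^{d-1}(1-r²) f')' - ℓ(ℓ+d-2) r^{d-3} f`
maps `r^n` to a combination of `r^{n+d-3}` and `r^{n+d-1}`. For `N = ℓ + 2k`,

`L(r^n) + N(N+d) r^{d-1} r^n = r^{d-3} ((n-ℓ)(n+ℓ+d-2) r^n + (N-n)(N+n+d) r^{n+2})`.

The exponents `ℓ + 2(k-s)` of `R_{ℓ,k}` go down in steps of two, so the first term at `s` has the
degree of the second term at `s + 1`, and the recurrence between consecutive coefficients makes the
two cancel. The sum over `s` telescopes; at the top end `N - n = 0`, at the bottom end the binomial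
coefficient `binom(k, k+1)` vanishes.
-/

open Finset

/-- The radial Zernike polynomial `R_{ℓ,k}` in dimension `d`. -/
noncomputable def zernikeR (d ℓ k : ℕ) (r : ℝ) : ℝ :=
  Real.sqrt (2 * ℓ + 4 * k + d) *
    ∑ s ∈ Finset.range (k + 1),
      (-1 : ℝ) ^ s * (k.choose s : ℝ) * ((k.factorial : ℝ))⁻¹ *
        (∏ j ∈ Finset.Icc 1 k, ((ℓ : ℝ) + 2 * k - s - j + d / 2)) *
        r ^ (ℓ + 2 * (k - s))

section Operator

lemma zpow_sub_one_eq_zpow_sub_three_mul_sq {K : Type*} [Field K] {x : K} (hx : x ≠ 0) (m : ℤ) :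
    x ^ (m - 1) = x ^ (m - 3) * x ^ 2 := by
  rw [← zpow_natCast x 2, ← zpow_add₀ hx]
  ring_nf

/-- The radial Zernike Sturm–Liouville operator in dimension `d` and angular degree `ℓ`,
`f ↦ (r^{d-1}(1-r²) f')' - ℓ(ℓ+d-2) r^{d-3} f`. The powers have integer exponents, since `d - 3`
may be negative, so it is meaningful for `r ≠ 0`. -/
noncomputable def zernikeOperator (d ℓ : ℕ) (f : ℝ → ℝ) (r : ℝ) : ℝ :=
  deriv (fun t : ℝ => t ^ ((d : ℤ) - 1) * (1 - t ^ 2) * deriv f t) r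
    - (ℓ : ℝ) * ((ℓ : ℝ) + (d : ℝ) - 2) * r ^ ((d : ℤ) - 3) * f r

variable (d ℓ : ℕ) {r : ℝ}

lemma hasDerivAt_zernikeWeight (hr : r ≠ 0) :
    HasDerivAt (fun t : ℝ => t ^ ((d : ℤ) - 1) * (1 - t ^ 2))
      (r ^ ((d : ℤ) - 3) * (r * ((d : ℝ) - 1 - (d + 1) * r ^ 2))) r := by
  have hpow := hasDerivAt_zpow ((d : ℤ) - 1) r (.inl hr)
  have hsub := (hasDerivAt_pow 2 r).const_sub 1
  have hzpow : r ^ ((d : ℤ) - 1 - 1) = r ^ ((d : ℤ) - 3) * r := by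
    rw [← zpow_add_one₀ hr]
    ring_nf
  refine (hpow.mul hsub).congr_deriv ?_
  rw [hzpow, zpow_sub_one_eq_zpow_sub_three_mul_sq hr]
  push_cast
  ring

lemma zernikeOperator_eq_secondOrder (hr : r ≠ 0) {f : ℝ → ℝ}
    (hf : DifferentiableAt ℝ (deriv f) r) :
    zernikeOperator d ℓ f r = r ^ ((d : ℤ) - 3) *
      (r ^ 2 * (1 - r ^ 2) * deriv (deriv f) r + r * ((d : ℝ) - 1 - (d + 1) * r ^ 2) * deriv f r
        - ℓ * ((ℓ : ℝ) + d - 2) * f r) := by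
  rw [zernikeOperator, ((hasDerivAt_zernikeWeight d hr).fun_mul hf.hasDerivAt).deriv,
    zpow_sub_one_eq_zpow_sub_three_mul_sq hr]
  ring

lemma zernikeOperator_const_mul (c : ℝ) (f : ℝ → ℝ) :
    zernikeOperator d ℓ (fun t => c * f t) r = c * zernikeOperator d ℓ f r := by
  simp only [zernikeOperator, deriv_const_mul_field, mul_left_comm _ c, mul_sub]

lemma zernikeOperator_sum (hr : r ≠ 0) {ι : Type*} (S : Finset ι) {f : ι → ℝ → ℝ}
    (hf : ∀ i ∈ S, ContDiff ℝ 2 (f i)) :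
    zernikeOperator d ℓ (fun t => ∑ i ∈ S, f i t) r = ∑ i ∈ S, zernikeOperator d ℓ (f i) r := by
  have hf' : ∀ i ∈ S, DifferentiableAt ℝ (deriv (f i)) r := fun i hi =>
    (hf i hi).differentiable_deriv_two r
  have hderiv : deriv (fun t => ∑ i ∈ S, f i t) = fun t => ∑ i ∈ S, deriv (f i) t :=
    funext fun t => deriv_fun_sum fun i hi => (hf i hi).differentiable two_ne_zero t
  have hdiff : DifferentiableAt ℝ (deriv fun t => ∑ i ∈ S, f i t) r :=
    hderiv ▸ DifferentiableAt.fun_sum hf'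
  rw [zernikeOperator_eq_secondOrder d ℓ hr hdiff, hderiv, deriv_fun_sum hf',
    sum_congr rfl fun i hi => zernikeOperator_eq_secondOrder d ℓ hr (hf' i hi)]
  simp only [mul_sum, ← sum_add_distrib, ← sum_sub_distrib]

lemma zernikeOperator_pow (hr : r ≠ 0) (n : ℕ) :
    zernikeOperator d ℓ (fun t => t ^ n) r = r ^ ((d : ℤ) - 3) *
      (((n : ℝ) - ℓ) * (n + ℓ + d - 2) * r ^ n - n * (n + d) * r ^ (n + 2)) := by
  have hderiv : deriv (fun t : ℝ => t ^ n) = fun t => (n : ℝ) * t ^ (n - 1) :=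
    funext fun t => deriv_pow_field n
  have hdiff : DifferentiableAt ℝ (deriv fun t : ℝ => t ^ n) r := by
    rw [hderiv]
    fun_prop
  have hfirst : r * (n * r ^ (n - 1)) = n * r ^ n := by
    rcases n with _ | n
    · simp
    · rw [Nat.add_sub_cancel, pow_succ]
      ring
  have hsecond : r ^ 2 * (n * ((n - 1 : ℕ) * r ^ (n - 1 - 1))) = n * ((n : ℝ) - 1) * r ^ n := by
    rcases n with _ | _ | n
    · simp
    · simp
    · simp only [Nat.add_sub_cancel]
      push_cast
      ring
  rw [zernikeOperator_eq_secondOrder d ℓ hr hdiff, hderiv, deriv_const_mul_field, deriv_pow_field]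
  linear_combination r ^ ((d : ℤ) - 3) *
    ((1 - r ^ 2) * hsecond + ((d : ℝ) - 1 - (d + 1) * r ^ 2) * hfirst)

/-- The residual of the monomial `r ^ n` in the eigenvalue equation
`L f + N(N+d) r^{d-1} f = 0` for `L = zernikeOperator d ℓ`, divided by `r^{d-3}` so that it is a
polynomial in `r`. -/
noncomputable def zernikeResidual (d ℓ : ℕ) (N : ℝ) (n : ℕ) (r : ℝ) : ℝ :=
  ((n : ℝ) - ℓ) * (n + ℓ + d - 2) * r ^ n + (N - n) * (N + n + d) * r ^ (n + 2)

lemma zernikeOperator_pow_add_eigenvalue_mul (hr : r ≠ 0) (N : ℝ) (n : ℕ) :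
    zernikeOperator d ℓ (fun t => t ^ n) r + N * (N + d) * r ^ ((d : ℤ) - 1) * r ^ n =
      r ^ ((d : ℤ) - 3) * zernikeResidual d ℓ N n r := by
  rw [zernikeOperator_pow d ℓ hr, zernikeResidual, zpow_sub_one_eq_zpow_sub_three_mul_sq hr]
  ring

end Operator

section Coefficients

lemma cast_choose_succ_mul {R : Type*} [Ring R] (n k : ℕ) :
    (n.choose (k + 1) : R) * (k + 1) = n.choose k * (n - k) := by
  rcases le_or_gt k n with h | h
  · rw [← Nat.cast_sub h]
    exact_mod_cast congr_arg (Nat.cast (R := R)) (n.choose_succ_right_eq k)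
  · simp [Nat.choose_eq_zero_of_lt h, Nat.choose_eq_zero_of_lt (h.trans k.lt_succ_self)]

lemma mul_descPochhammer_eval_sub_one {R : Type*} [CommRing R] (n : ℕ) (x : R) :
    x * (descPochhammer R n).eval (x - 1) = (descPochhammer R n).eval x * (x - n) := by
  rw [← descPochhammer_succ_eval, descPochhammer_succ_left]
  simp

/-- The coefficient of `r ^ (ℓ + 2 * (k - s))` in `R_{ℓ,k}`, without the normalisation factor
`√(2ℓ+4k+d)`. The product over `j` in `zernikeR` is written as a falling factorial. -/
noncomputable def zernikeCoeff (d ℓ k s : ℕ) : ℝ :=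
  (-1 : ℝ) ^ s * (k.choose s : ℝ) * ((k.factorial : ℝ))⁻¹ *
    (descPochhammer ℝ k).eval ((ℓ : ℝ) + 2 * k - s + d / 2 - 1)

variable (d ℓ k : ℕ)

lemma zernikeR_eq_sum_zernikeCoeff : zernikeR d ℓ k = fun r => √(2 * ℓ + 4 * k + d) *
    ∑ s ∈ range (k + 1), zernikeCoeff d ℓ k s * r ^ (ℓ + 2 * (k - s)) := by
  have hprod (s : ℕ) : ∏ j ∈ Icc 1 k, ((ℓ : ℝ) + 2 * k - s - j + d / 2) =
      (descPochhammer ℝ k).eval ((ℓ : ℝ) + 2 * k - s + d / 2 - 1) := by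
    rw [descPochhammer_eval_eq_prod_range, ← Ico_add_one_right_eq_Icc, prod_Ico_eq_prod_range]
    refine prod_congr rfl fun j _ => ?_
    push_cast
    ring
  funext r
  simp only [zernikeR, zernikeCoeff, hprod]

lemma zernikeCoeff_eq_zero_of_lt {s : ℕ} (h : k < s) : zernikeCoeff d ℓ k s = 0 := by
  simp [zernikeCoeff, Nat.choose_eq_zero_of_lt h]

lemma zernikeCoeff_succ_mul (s : ℕ) :
    zernikeCoeff d ℓ k (s + 1) * (((s : ℝ) + 1) * (ℓ + 2 * k - s - 1 + d / 2)) =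
      -(zernikeCoeff d ℓ k s * (((k : ℝ) - s) * (ℓ + k - s - 1 + d / 2))) := by
  have hchoose := cast_choose_succ_mul (R := ℝ) k s
  have hpoch := mul_descPochhammer_eval_sub_one k ((ℓ : ℝ) + 2 * k - s + d / 2 - 1)
  have hshift : (ℓ : ℝ) + 2 * k - (s + 1 : ℕ) + d / 2 - 1 =
      ℓ + 2 * k - s + d / 2 - 1 - 1 := by
    push_cast
    ring
  rw [zernikeCoeff, zernikeCoeff, hshift, pow_succ]
  set x : ℝ := ℓ + 2 * k - s + d / 2 - 1
  linear_combination
    (-(-1 : ℝ) ^ s * (k.factorial : ℝ)⁻¹ * x * (descPochhammer ℝ k).eval (x - 1)) * hchoose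
      - ((-1 : ℝ) ^ s * (k.factorial : ℝ)⁻¹ * (k.choose s * ((k : ℝ) - s))) * hpoch

lemma sum_zernikeCoeff_mul_zernikeResidual (r : ℝ) :
    ∑ s ∈ range (k + 1),
      zernikeCoeff d ℓ k s * zernikeResidual d ℓ (ℓ + 2 * k) (ℓ + 2 * (k - s)) r = 0 := by
  -- `F s` is the higher-degree part of the residual at `s`. With `k + 1 - s` in its exponent the
  -- shift to `s + 1` is exact at `s = k` too, where `k - (s + 1)` would be truncated.
  let F (s : ℕ) : ℝ := zernikeCoeff d ℓ k s *
    (4 * (s * ((ℓ : ℝ) + 2 * k - s + d / 2)) * r ^ (ℓ + 2 * (k + 1 - s)))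
  have hF_succ (s : ℕ) : F (s + 1) = -(zernikeCoeff d ℓ k s *
      (4 * (((k : ℝ) - s) * (ℓ + k - s - 1 + d / 2)) * r ^ (ℓ + 2 * (k - s)))) := by
    simp only [F, Nat.add_sub_add_right]
    push_cast
    linear_combination (4 * r ^ (ℓ + 2 * (k - s))) * zernikeCoeff_succ_mul d ℓ k s
  have htelescope : ∑ s ∈ range (k + 1), (F s - F (s + 1)) = 0 := by
    rw [sum_range_sub']
    simp [F, zernikeCoeff_eq_zero_of_lt d ℓ k k.lt_succ_self]
  rw [← htelescope]
  refine sum_congr rfl fun s hs => ?_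
  have hsk : s ≤ k := Nat.lt_succ_iff.mp (mem_range.mp hs)
  have hexp : ℓ + 2 * (k + 1 - s) = ℓ + 2 * (k - s) + 2 := by omega
  rw [hF_succ]
  simp only [F, zernikeResidual, hexp]
  push_cast [Nat.cast_sub hsk]
  ring

lemma zernikeOperator_zernikeR {r : ℝ} (hr : r ≠ 0) :
    zernikeOperator d ℓ (zernikeR d ℓ k) r = √(2 * ℓ + 4 * k + d) *
      ∑ s ∈ range (k + 1), zernikeCoeff d ℓ k s *
        zernikeOperator d ℓ (fun t => t ^ (ℓ + 2 * (k - s))) r := by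
  rw [zernikeR_eq_sum_zernikeCoeff, zernikeOperator_const_mul,
    zernikeOperator_sum d ℓ hr _ fun s _ => by fun_prop]
  simp only [zernikeOperator_const_mul]

end Coefficients

theorem zernikeR_sturmLiouville_general (d ℓ k : ℕ) {r : ℝ} (hr : r ≠ 0) :
    zernikeOperator d ℓ (zernikeR d ℓ k) r =
      -(((ℓ : ℝ) + 2 * k) * ((ℓ : ℝ) + 2 * k + d)) * r ^ ((d : ℤ) - 1) * zernikeR d ℓ k r := by
  have hcancel : ∑ s ∈ range (k + 1), zernikeCoeff d ℓ k s *
      (zernikeOperator d ℓ (fun t => t ^ (ℓ + 2 * (k - s))) r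
        + (ℓ + 2 * k : ℝ) * (ℓ + 2 * k + d) * r ^ ((d : ℤ) - 1) * r ^ (ℓ + 2 * (k - s))) = 0 := by
    simp only [zernikeOperator_pow_add_eigenvalue_mul d ℓ hr, mul_left_comm _ (r ^ ((d : ℤ) - 3)),
      ← mul_sum, sum_zernikeCoeff_mul_zernikeResidual, mul_zero]
  simp only [mul_add _ (zernikeOperator _ _ _ _), sum_add_distrib,
    mul_left_comm _ (_ * r ^ ((d : ℤ) - 1)), ← mul_sum] at hcancel
  rw [zernikeOperator_zernikeR d ℓ k hr, zernikeR_eq_sum_zernikeCoeff]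
  linear_combination √(2 * ℓ + 4 * k + d) * hcancel

/-- The radial Zernike polynomial `R_{ℓ,k}` satisfies the singular
Sturm–Liouville equation
`d/dr[r^{d-1}(1-r²) R'(r)] - ℓ(ℓ+d-2) r^{d-3} R(r) = -(ℓ+2k)(ℓ+2k+d) r^{d-1} R(r)`
for every `r > 0`, i.e. it is an eigenfunction of the radial Zernike Sturm–Liouville
operator with eigenvalue `μ_{ℓ,k} = (ℓ+2k)(ℓ+2k+d)`. -/
theorem zernikeR_sturmLiouville (d ℓ k : ℕ) (hd : 2 ≤ d) (r : ℝ) (hr : 0 < r) :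
    deriv (fun t : ℝ => t ^ ((d : ℤ) - 1) * (1 - t ^ 2) * deriv (zernikeR d ℓ k) t) r
      - (ℓ : ℝ) * ((ℓ : ℝ) + (d : ℝ) - 2) * r ^ ((d : ℤ) - 3) * zernikeR d ℓ k r
    = -(((ℓ : ℝ) + 2 * k) * ((ℓ : ℝ) + 2 * k + d)) * r ^ ((d : ℤ) - 1) * zernikeR d ℓ k r :=
  zernikeR_sturmLiouville_general d ℓ k hr.ne'
end

section
/- Let d ≥ 2 be an integer and fix an integer ℓ ≥ 0. Then the radial Zernike polynomials are orthonormal in the weighted space L²([0,1], r^{d−1} dr): for all integers k, k′ ≥ 0, ∫₀¹ R_{ℓ,k}(r) · R_{ℓ,k′}(r) · r^{d−1} dr equals 1 if k = k′ and equals 0 if k ≠ k′. -/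
/-!
With `a = ℓ + d/2`, the substitution `x = r²` turns `R_{ℓ,k}` into `r^ℓ` times a multiple of the
shifted Jacobi polynomial `J_k(x) = ∑ₜ (-1)^(k-t) (k choose t) (a+t)ₖ / k! · xᵗ`, where
`(y)ₖ = y(y+1)⋯(y+k-1)`, and the weight into `x^(a-1) dx / 2`. The integral of `x^(c-1) J_k` over
`[0, 1]` is therefore `1/k!` times the `k`-th forward difference at `a` of `y ↦ (y)ₖ / (y - a + c)`.
Such a difference does not see the polynomial part of the quotient, and for the simple pole that
remains it is explicit. At `c = a + m` this gives `m(m-1)⋯(m-k+1) / (a+m)ₖ₊₁`, which vanishes for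
`m < k`; hence `J_k` is orthogonal to lower degrees, and its pairing with itself only involves its
top coefficient and the moment at `m = k`.
-/

open Finset

section ForwardDifference

open Polynomial

lemma fwdDiff_iter_congr {M G : Type*} [AddCommMonoid M] [AddCommGroup G] {f g : M → G} {h x : M}
    {n : ℕ} (hfg : ∀ t ≤ n, f (x + t • h) = g (x + t • h)) :
    (fwdDiff h)^[n] f x = (fwdDiff h)^[n] g x := by
  simp_rw [fwdDiff_iter_eq_sum_shift]
  exact sum_congr rfl fun t ht ↦ by rw [hfg t (Nat.lt_succ_iff.1 (mem_range.1 ht))]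

lemma ascPochhammer_succ_eval_left {S : Type*} [CommSemiring S] (n : ℕ) (x : S) :
    (ascPochhammer S (n + 1)).eval x = x * (ascPochhammer S n).eval (x + 1) := by
  simp [ascPochhammer_succ_left]

lemma eval_eq_eval_add_sub_mul_eval_divByMonic {R : Type*} [CommRing R] (P : R[X]) (c y : R) :
    P.eval y = P.eval c + (y - c) * (P /ₘ (X - C c)).eval y := by
  have hdiv := congrArg (eval y) (modByMonic_add_div P (X - C c))
  rw [modByMonic_X_sub_C_eq_C_eval] at hdiv
  simpa using hdiv.symm

lemma fwdDiff_iter_eval_divByMonic_eq_zero {R : Type*} [CommRing R] {P : R[X]} {k : ℕ}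
    (hP : P.natDegree ≤ k) (c : R) :
    (fwdDiff 1)^[k] (P /ₘ (X - C c)).eval = 0 := by
  nontriviality R
  obtain hQ | hQ := eq_or_ne (P /ₘ (X - C c)) 0
  · funext x
    simp [hQ, fwdDiff_iter_eq_sum_shift]
  · have hdeg : (P /ₘ (X - C c)).natDegree < k := by
      have hP₀ : 1 ≤ P.natDegree := by
        by_contra! hlt
        refine hQ ((divByMonic_eq_zero_iff (monic_X_sub_C c)).2 ?_)
        exact degree_lt_degree (by simpa using hlt)
      rw [natDegree_divByMonic _ (monic_X_sub_C c), natDegree_X_sub_C]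
      lia
    exact fwdDiff_iter_eq_zero_of_degree_lt hdeg

variable {K : Type*} [Field K]

lemma fwdDiff_iter_inv {k : ℕ} {x : K} (hx : (ascPochhammer K (k + 1)).eval x ≠ 0) :
    (fwdDiff 1)^[k] (fun y : K ↦ y⁻¹) x
      = (-1) ^ k * k.factorial / (ascPochhammer K (k + 1)).eval x := by
  induction k generalizing x with
  | zero => simp
  | succ k ih =>
    have hleft := ascPochhammer_succ_eval_left (k + 1) x
    have hright := ascPochhammer_succ_eval (k + 1) x
    have hx₁ : (ascPochhammer K (k + 1)).eval (x + 1) ≠ 0 := right_ne_zero_of_mul (hleft ▸ hx)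
    have hx₀ : (ascPochhammer K (k + 1)).eval x ≠ 0 := left_ne_zero_of_mul (hright ▸ hx)
    have hxk : x + (k + 1 : ℕ) ≠ 0 := right_ne_zero_of_mul (hright ▸ hx)
    rw [Function.iterate_succ_apply', fwdDiff, ih hx₀, ih hx₁, hright,
      div_sub_div _ _ hx₁ hx₀, div_eq_div_iff (mul_ne_zero hx₁ hx₀) (mul_ne_zero hx₀ hxk),
      Nat.factorial_succ]
    push_cast at hleft hright ⊢
    linear_combination (-1) ^ k * (k.factorial : K) * (ascPochhammer K (k + 1)).eval x *
      (hleft - hright)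

lemma fwdDiff_iter_eval_div_sub {P : K[X]} {k : ℕ} (hP : P.natDegree ≤ k) {c x : K}
    (hx : (ascPochhammer K (k + 1)).eval (x - c) ≠ 0) :
    (fwdDiff 1)^[k] (fun y ↦ P.eval y / (y - c)) x
      = P.eval c * ((-1) ^ k * k.factorial / (ascPochhammer K (k + 1)).eval (x - c)) := by
  have hpole : ∀ t ≤ k, x + t • (1 : K) - c ≠ 0 := by
    intro t ht hzero
    refine hx ((ascPochhammer_eval_eq_zero_iff _ _).2 ⟨t, Nat.lt_succ_of_le ht, ?_⟩)
    rw [nsmul_one] at hzero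
    linear_combination hzero
  calc (fwdDiff 1)^[k] (fun y ↦ P.eval y / (y - c)) x
      = (fwdDiff 1)^[k] (P.eval c • (fun y ↦ (y + -c)⁻¹) + (P /ₘ (X - C c)).eval) x := by
        refine fwdDiff_iter_congr fun t ht ↦ ?_
        have ht₀ := hpole t ht
        rw [eval_eq_eval_add_sub_mul_eval_divByMonic P c, add_div, mul_div_cancel_left₀ _ ht₀]
        simp [div_eq_mul_inv, sub_eq_add_neg]
    _ = P.eval c * (fwdDiff 1)^[k] (fun y ↦ y⁻¹) (x - c) := by
        rw [fwdDiff_iter_add, fwdDiff_iter_const_smul, fwdDiff_iter_eval_divByMonic_eq_zero hP,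
          sub_eq_add_neg x c, ← fwdDiff_iter_comp_add]
        simp
    _ = _ := by rw [fwdDiff_iter_inv hx]

end ForwardDifference

section ShiftedJacobi

open Polynomial

variable {K : Type*} [Field K]

/-- The Jacobi polynomial `P_k^{(0, a-1)}(2x - 1)`, which is orthogonal on `[0, 1]` for the weight
`x^(a-1)`. It is the radial part of a Zernike polynomial when `a = ℓ + d/2`. -/
noncomputable def shiftedJacobi (a : K) (k : ℕ) : K[X] :=
  ∑ t ∈ range (k + 1), monomial t
    ((-1) ^ (k - t) * k.choose t * (ascPochhammer K k).eval (a + t) / k.factorial)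

lemma coeff_shiftedJacobi_of_le (a : K) {k t : ℕ} (ht : t ≤ k) :
    (shiftedJacobi a k).coeff t
      = (-1) ^ (k - t) * k.choose t * (ascPochhammer K k).eval (a + t) / k.factorial := by
  simp [shiftedJacobi, coeff_monomial, Nat.lt_succ_of_le ht]

lemma natDegree_shiftedJacobi_le (a : K) (k : ℕ) : (shiftedJacobi a k).natDegree ≤ k :=
  natDegree_sum_le_of_forall_le _ _ fun _ ht ↦
    (natDegree_monomial_le _).trans (Nat.lt_succ_iff.1 (mem_range.1 ht))

lemma sum_coeff_shiftedJacobi_div [CharZero K] (a : K) {c : K} {k : ℕ}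
    (hc : (ascPochhammer K (k + 1)).eval c ≠ 0) :
    ∑ t ∈ range (k + 1), (shiftedJacobi a k).coeff t / (c + t)
      = (descPochhammer K k).eval (c - a) / (ascPochhammer K (k + 1)).eval c := by
  have hk : (k.factorial : K) ≠ 0 := Nat.cast_ne_zero.2 k.factorial_ne_zero
  have hdesc := ascPochhammer_eval_neg_eq_descPochhammer K (c - a) k
  have hsign : ((-1 : K) ^ k) * (-1) ^ k = 1 := by rw [← mul_pow]; simp
  have hdiff := fwdDiff_iter_eval_div_sub (ascPochhammer_natDegree (S := K) k).le
    (x := a) (c := a - c) (by rwa [sub_sub_cancel])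
  calc ∑ t ∈ range (k + 1), (shiftedJacobi a k).coeff t / (c + t)
      = ((fwdDiff 1)^[k] (fun y ↦ (ascPochhammer K k).eval y / (y - (a - c))) a) / k.factorial := by
        rw [fwdDiff_iter_eq_sum_shift, sum_div]
        refine sum_congr rfl fun t ht ↦ ?_
        rw [coeff_shiftedJacobi_of_le a (Nat.lt_succ_iff.1 (mem_range.1 ht)), nsmul_one,
          zsmul_eq_mul, show a + t - (a - c) = c + t by ring]
        push_cast
        ring
    _ = _ := by
        rw [hdiff, sub_sub_cancel, ← neg_sub c a, hdesc]
        field_simp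
        linear_combination (descPochhammer K k).eval (c - a) * hsign

end ShiftedJacobi

section Integrals

open Polynomial MeasureTheory intervalIntegral

lemma integral_mul_eval {μ : Measure ℝ} {u v : ℝ} {w : ℝ → ℝ} {p : ℝ[X]} {n : ℕ}
    (hp : p.natDegree < n) (hw : ∀ i < n, IntervalIntegrable (fun x ↦ w x * x ^ i) μ u v) :
    ∫ x in u..v, w x * p.eval x ∂μ = ∑ i ∈ range n, p.coeff i * ∫ x in u..v, w x * x ^ i ∂μ := by
  simp_rw [eval_eq_sum_range' hp, mul_sum, mul_left_comm (w _)]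
  rw [integral_finsetSum fun i hi ↦ (hw i (mem_range.1 hi)).const_mul _]
  simp_rw [intervalIntegral.integral_const_mul]

lemma integral_rpow_mul_pow_mul (f : ℝ → ℝ) (s : ℝ) (m : ℕ) {u v : ℝ} (hu : 0 ≤ u) (hv : 0 ≤ v) :
    ∫ x in u..v, x ^ s * (x ^ m * f x) = ∫ x in u..v, x ^ (s + m) * f x := by
  refine integral_congr_uIoo fun x hx ↦ ?_
  have hx₀ : 0 < x := (le_min hu hv).trans_lt hx.1
  simp only [Real.rpow_add_natCast hx₀.ne', mul_assoc]

lemma integral_rpow_mul_eval {c : ℝ} (hc : 0 < c) {p : ℝ[X]} {n : ℕ} (hp : p.natDegree < n) :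
    ∫ x in (0 : ℝ)..1, x ^ (c - 1) * p.eval x = ∑ i ∈ range n, p.coeff i / (c + i) := by
  have hmonomial (i : ℕ) : ∫ x in (0 : ℝ)..1, x ^ (c - 1) * x ^ i = (c + i)⁻¹ := by
    have hci : 0 < c + i := by positivity
    have hshift := integral_rpow_mul_pow_mul 1 (c - 1) i le_rfl zero_le_one
    simp only [Pi.one_apply, mul_one] at hshift
    rw [hshift, integral_rpow (Or.inl (by linarith)), show c - 1 + i + 1 = c + i by ring,
      Real.one_rpow, Real.zero_rpow hci.ne', sub_zero, one_div]
  have hint (i : ℕ) : IntervalIntegrable (fun x ↦ x ^ (c - 1) * x ^ i) volume 0 1 :=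
    (intervalIntegrable_rpow' (by linarith)).mul_continuousOn (continuousOn_pow i)
  rw [integral_mul_eval hp fun i _ ↦ hint i]
  simp_rw [hmonomial, ← div_eq_mul_inv]

lemma integral_rpow_mul_eval_shiftedJacobi (a : ℝ) {c : ℝ} (hc : 0 < c) (k : ℕ) :
    ∫ x in (0 : ℝ)..1, x ^ (c - 1) * (shiftedJacobi a k).eval x
      = (descPochhammer ℝ k).eval (c - a) / (ascPochhammer ℝ (k + 1)).eval c := by
  rw [integral_rpow_mul_eval hc (Nat.lt_succ_of_le (natDegree_shiftedJacobi_le a k)),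
    sum_coeff_shiftedJacobi_div a (ascPochhammer_pos _ _ hc).ne']

variable {a : ℝ} (ha : 0 < a)
include ha

lemma integral_rpow_mul_eval_shiftedJacobi_mul_pow (k m : ℕ) :
    ∫ x in (0 : ℝ)..1, x ^ (a - 1) * (shiftedJacobi a k).eval x * x ^ m
      = m.descFactorial k / (ascPochhammer ℝ (k + 1)).eval (a + m) := by
  have hm : 0 < a + m := by positivity
  simp_rw [mul_assoc, mul_comm ((shiftedJacobi a k).eval _)]
  rw [integral_rpow_mul_pow_mul _ _ _ le_rfl zero_le_one, show a - 1 + m = a + m - 1 by ring,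
    integral_rpow_mul_eval_shiftedJacobi a hm, add_sub_cancel_left,
    descPochhammer_eval_eq_descFactorial]

lemma integral_rpow_mul_eval_shiftedJacobi_mul_eval {k : ℕ} {q : ℝ[X]} (hq : q.natDegree ≤ k) :
    ∫ x in (0 : ℝ)..1, x ^ (a - 1) * (shiftedJacobi a k).eval x * q.eval x
      = q.coeff k * (k.factorial / (ascPochhammer ℝ (k + 1)).eval (a + k)) := by
  have hint (i : ℕ) : IntervalIntegrable
      (fun x ↦ x ^ (a - 1) * (shiftedJacobi a k).eval x * x ^ i) volume 0 1 :=
    ((intervalIntegrable_rpow' (by linarith)).mul_continuousOn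
      (shiftedJacobi a k).continuous.continuousOn).mul_continuousOn (continuousOn_pow i)
  rw [integral_mul_eval (Nat.lt_succ_of_le hq) fun i _ ↦ hint i]
  simp_rw [integral_rpow_mul_eval_shiftedJacobi_mul_pow ha]
  rw [sum_range_succ, sum_eq_zero, zero_add, Nat.descFactorial_self]
  intro m hm
  simp [Nat.descFactorial_of_lt (mem_range.1 hm)]

lemma integral_rpow_mul_eval_shiftedJacobi_mul_self (k : ℕ) :
    ∫ x in (0 : ℝ)..1, x ^ (a - 1) * (shiftedJacobi a k).eval x * (shiftedJacobi a k).eval x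
      = (a + 2 * k)⁻¹ := by
  have hk : (k.factorial : ℝ) ≠ 0 := Nat.cast_ne_zero.2 k.factorial_ne_zero
  have hpoch : (ascPochhammer ℝ k).eval (a + k) ≠ 0 := (ascPochhammer_pos _ _ (by positivity)).ne'
  rw [integral_rpow_mul_eval_shiftedJacobi_mul_eval ha (natDegree_shiftedJacobi_le a k),
    coeff_shiftedJacobi_of_le a le_rfl, ascPochhammer_succ_eval, Nat.sub_self, Nat.choose_self,
    add_assoc, ← two_mul]
  field_simp
  simp

lemma integral_rpow_mul_eval_shiftedJacobi_mul_of_lt {j k : ℕ} (hjk : j < k) :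
    ∫ x in (0 : ℝ)..1, x ^ (a - 1) * (shiftedJacobi a k).eval x * (shiftedJacobi a j).eval x
      = 0 := by
  have hdeg := (natDegree_shiftedJacobi_le a j).trans_lt hjk
  rw [integral_rpow_mul_eval_shiftedJacobi_mul_eval ha hdeg.le, coeff_eq_zero_of_natDegree_lt hdeg,
    zero_mul]

theorem shiftedJacobi_orthogonal (k k' : ℕ) :
    ∫ x in (0 : ℝ)..1, x ^ (a - 1) * (shiftedJacobi a k).eval x * (shiftedJacobi a k').eval x
      = if k = k' then (a + 2 * k)⁻¹ else 0 := by
  rcases lt_trichotomy k k' with h | rfl | h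
  · simp_rw [mul_right_comm _ ((shiftedJacobi a k).eval _)]
    rw [if_neg h.ne, integral_rpow_mul_eval_shiftedJacobi_mul_of_lt ha h]
  · rw [if_pos rfl, integral_rpow_mul_eval_shiftedJacobi_mul_self ha]
  · rw [if_neg h.ne', integral_rpow_mul_eval_shiftedJacobi_mul_of_lt ha h]

end Integrals

section Zernike

open Polynomial intervalIntegral

lemma prod_Icc_sub_eq_eval_ascPochhammer {R : Type*} [CommRing R] (y : R) (k : ℕ) :
    ∏ j ∈ Icc 1 k, (y + k - j) = (ascPochhammer R k).eval y := by
  have hdesc := descPochhammer_eval_eq_ascPochhammer R (y + k - 1) k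
  rw [show y + k - 1 - k + 1 = y by ring] at hdesc
  rw [← hdesc, descPochhammer_eval_eq_prod_range, ← Ico_add_one_right_eq_Icc,
    prod_Ico_eq_prod_range]
  refine prod_congr (by simp) fun i _ ↦ ?_
  push_cast
  ring

lemma zernikeR_eq_sqrt_mul_eval_shiftedJacobi (d ℓ k : ℕ) (r : ℝ) :
    zernikeR d ℓ k r = √(2 * ℓ + 4 * k + d) *
      (r ^ ℓ * (shiftedJacobi (ℓ + d / 2 : ℝ) k).eval (r ^ 2)) := by
  rw [zernikeR, ← sum_range_reflect, eval_eq_sum_range'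
    (Nat.lt_succ_of_le (natDegree_shiftedJacobi_le (ℓ + d / 2 : ℝ) k))]
  congr 1
  rw [mul_sum]
  refine sum_congr rfl fun t ht ↦ ?_
  have htk : t ≤ k := Nat.lt_succ_iff.1 (mem_range.1 ht)
  rw [coeff_shiftedJacobi_of_le _ htk, ← prod_Icc_sub_eq_eval_ascPochhammer, Nat.add_sub_cancel,
    Nat.choose_symm htk, Nat.sub_sub_self htk, Nat.cast_sub htk]
  have hprod : ∏ j ∈ Icc 1 k, ((ℓ : ℝ) + 2 * k - (k - t) - j + d / 2)
      = ∏ j ∈ Icc 1 k, ((ℓ : ℝ) + d / 2 + t + k - j) :=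
    prod_congr rfl fun j _ ↦ by ring
  rw [hprod]
  ring

lemma integral_pow_mul_comp_pow_succ (g : ℝ → ℝ) (n : ℕ) {b : ℝ} (hb : 0 ≤ b) :
    ∫ r in (0 : ℝ)..b, r ^ n * g (r ^ (n + 1)) = (∫ x in (0 : ℝ)..b ^ (n + 1), g x) / (n + 1) := by
  have hsubst := integral_deriv_smul_comp_of_deriv_nonneg (a := 0) (b := b)
    (f := fun r : ℝ ↦ r ^ (n + 1)) (f' := fun r ↦ (n + 1) * r ^ n) (g := g) (by fun_prop)
    (fun r _ ↦ by simpa using hasDerivAt_pow (n + 1) r)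
    (fun r hr ↦ by
      have hr₀ : 0 ≤ r := (le_min le_rfl hb).trans hr.1.le
      positivity)
  simp only [Function.comp_apply, smul_eq_mul, mul_assoc] at hsubst
  rw [intervalIntegral.integral_const_mul, zero_pow n.succ_ne_zero] at hsubst
  exact eq_div_of_mul_eq (by positivity) (by rw [mul_comm, hsubst])

lemma pow_mul_pow_mul_pow_pred_eq_mul_sq_rpow {r : ℝ} (hr : 0 < r) {d : ℕ} (hd : 0 < d) (ℓ : ℕ) :
    r ^ ℓ * r ^ ℓ * r ^ (d - 1) = r * (r ^ 2) ^ (ℓ + d / 2 - 1 : ℝ) := by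
  have hexp : ((ℓ + ℓ + (d - 1) : ℕ) : ℝ) = 1 + 2 * (ℓ + d / 2 - 1 : ℝ) := by
    push_cast [Nat.cast_pred hd]
    ring
  rw [← pow_add, ← pow_add, ← Real.rpow_natCast, hexp, Real.rpow_add hr, Real.rpow_one,
    Real.rpow_mul hr.le, Real.rpow_two]

lemma integral_zernikeR_mul_zernikeR {d : ℕ} (hd : 0 < d) (ℓ k k' : ℕ) :
    ∫ r in (0 : ℝ)..1, zernikeR d ℓ k r * zernikeR d ℓ k' r * r ^ (d - 1)
      = √(2 * ℓ + 4 * k + d) * √(2 * ℓ + 4 * k' + d) *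
        ((∫ x in (0 : ℝ)..1, x ^ (ℓ + d / 2 - 1 : ℝ) * (shiftedJacobi (ℓ + d / 2 : ℝ) k).eval x *
          (shiftedJacobi (ℓ + d / 2 : ℝ) k').eval x) / 2) := by
  have hsubst := integral_pow_mul_comp_pow_succ (fun x : ℝ ↦ x ^ (ℓ + d / 2 - 1 : ℝ) *
    (shiftedJacobi (ℓ + d / 2 : ℝ) k).eval x * (shiftedJacobi (ℓ + d / 2 : ℝ) k').eval x)
    1 zero_le_one
  rw [one_pow, Nat.cast_one, one_add_one_eq_two (R := ℝ)] at hsubst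
  rw [← hsubst, ← intervalIntegral.integral_const_mul]
  refine integral_congr_uIoo fun r hr ↦ ?_
  have hr₀ : 0 < r := by simpa using hr.1
  have hweight := pow_mul_pow_mul_pow_pred_eq_mul_sq_rpow hr₀ hd ℓ
  simp only [zernikeR_eq_sqrt_mul_eval_shiftedJacobi]
  linear_combination √(2 * ℓ + 4 * k + d) * √(2 * ℓ + 4 * k' + d) *
    (shiftedJacobi (ℓ + d / 2 : ℝ) k).eval (r ^ 2) *
    (shiftedJacobi (ℓ + d / 2 : ℝ) k').eval (r ^ 2) * hweight

theorem zernikeR_orthonormal_general (d ℓ : ℕ) (hd : 0 < d) (k k' : ℕ) :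
    ∫ r in (0 : ℝ)..1, zernikeR d ℓ k r * zernikeR d ℓ k' r * r ^ (d - 1)
      = if k = k' then 1 else 0 := by
  have ha : (0 : ℝ) < ℓ + d / 2 := by positivity
  rw [integral_zernikeR_mul_zernikeR hd, shiftedJacobi_orthogonal ha]
  split_ifs with hkk'
  · subst hkk'
    rw [Real.mul_self_sqrt (by positivity)]
    field_simp
    ring
  · simp

end Zernike

/-- For fixed `d ≥ 2` and `ℓ ≥ 0`, the radial Zernike polynomials
are orthonormal in the weighted space `L²([0,1], r^{d-1} dr)`. -/
theorem zernikeR_orthonormal (d ℓ : ℕ) (hd : 2 ≤ d) (k k' : ℕ) :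
    ∫ r in (0:ℝ)..1, zernikeR d ℓ k r * zernikeR d ℓ k' r * r ^ (d - 1)
      = if k = k' then 1 else 0 :=
  zernikeR_orthonormal_general d ℓ (by lia) k k'
end

section
/- Let d ≥ 2 be an integer and let ℓ, k ≥ 0 be integers with (ℓ,k) ≠ (0,0). Then the derivative of the radial Zernike polynomial at the right endpoint is strictly positive: R_{ℓ,k}′(1) > 0. Moreover, for ℓ = k = 0 the polynomial R_{0,0} is the constant function √d. -/
/-!
Put `y = ℓ + k + d/2 - 1` and let `(z)_k = z (z - 1) ⋯ (z - k + 1)` be the falling factorial. With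
`z = y + (k - s)`, the product over `j` is `(z)_k` and the exponent `ℓ + 2 (k - s)` is
`2z + ℓ - 2y`. Hence, up to the factor `√(2ℓ + 4k + d) / k!`, the alternating sum for the derivative
at `1` is the `k`-th forward difference at `y` of `(2z + ℓ - 2y) (z)_k`. This polynomial is a linear
combination of `(z)_{k+1}` and `(z)_k`, and the difference operator lowers falling factorials as
differentiation lowers powers, so
`R_{ℓ,k}'(1) = √(2ℓ + 4k + d) (ℓ + 2k (k + ℓ + d/2))`.
-/

open Finset

section FwdDiff

open fwdDiff

lemma fwdDiff_iter_eq_sum_shift_reflect {M G : Type*} [AddCommMonoid M] [AddCommGroup G] (h : M)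
    (f : M → G) (n : ℕ) (y : M) :
    (Δ_[h])^[n] f y = ∑ s ∈ range (n + 1), ((-1 : ℤ) ^ s * n.choose s) • f (y + (n - s) • h) := by
  rw [fwdDiff_iter_eq_sum_shift, ← sum_range_reflect]
  refine sum_congr rfl fun s hs => ?_
  have hsn : s ≤ n := mem_range_succ_iff.mp hs
  rw [Nat.add_sub_cancel, Nat.sub_sub_self hsn, Nat.choose_symm hsn]

variable {R : Type*} [CommRing R]

lemma fwdDiff_eval_descPochhammer_succ (n : ℕ) :
    Δ_[1] (fun z : R => (descPochhammer R (n + 1)).eval z) =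
      ((n + 1 : ℕ) : R) • fun z => (descPochhammer R n).eval z := by
  funext z
  have hcomp := congrArg (Polynomial.eval (z + 1)) (descPochhammer_succ_comp_X_sub_one (R := R) n)
  simp only [Polynomial.eval_comp, Polynomial.eval_sub, Polynomial.eval_add, Polynomial.eval_mul,
    Polynomial.eval_X, Polynomial.eval_one, Polynomial.eval_natCast, add_sub_cancel_right,
    smul_eq_mul] at hcomp
  simp only [fwdDiff, Nat.cast_succ, Pi.smul_apply, smul_eq_mul]
  linear_combination -hcomp

lemma fwdDiff_iter_eval_descPochhammer_add (n m : ℕ) :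
    (Δ_[1])^[n] (fun z : R => (descPochhammer R (m + n)).eval z) =
      ((m + 1).ascFactorial n : R) • fun z => (descPochhammer R m).eval z := by
  induction n with
  | zero => simp
  | succ n ih =>
    rw [← add_assoc, Function.iterate_succ_apply, fwdDiff_eval_descPochhammer_succ,
      fwdDiff_iter_const_smul, ih, smul_smul, ← Nat.cast_mul, Nat.ascFactorial_succ,
      add_right_comm m n 1]

lemma fwdDiff_iter_mul_add_mul_eval_descPochhammer (a b : R) (n : ℕ) (y : R) :
    (Δ_[1])^[n] (fun z => (a * z + b) * (descPochhammer R n).eval z) y =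
      n.factorial * (a * ((n + 1) * y + n) + b) := by
  have hsplit : (fun z => (a * z + b) * (descPochhammer R n).eval z) =
      a • (fun z => (descPochhammer R (1 + n)).eval z) +
        (b + a * n) • (fun z => (descPochhammer R (0 + n)).eval z) := by
    funext z
    simp only [Pi.add_apply, Pi.smul_apply, smul_eq_mul, zero_add, add_comm 1 n,
      descPochhammer_succ_eval]
    ring
  have hfactorial : Nat.ascFactorial (1 + 1) n = (n + 1) * n.factorial := by
    rw [← Nat.factorial_succ, add_comm n, ← Nat.factorial_mul_ascFactorial, Nat.factorial_one,
      one_mul]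
  rw [hsplit, fwdDiff_iter_add, fwdDiff_iter_const_smul, fwdDiff_iter_const_smul,
    fwdDiff_iter_eval_descPochhammer_add, fwdDiff_iter_eval_descPochhammer_add, hfactorial]
  simp only [Nat.cast_mul, Nat.cast_succ, descPochhammer_zero, descPochhammer_one, zero_add,
    Nat.one_ascFactorial, Polynomial.eval_X, Polynomial.eval_one, Pi.add_apply, Pi.smul_apply,
    smul_eq_mul, mul_one]
  ring

end FwdDiff

lemma prod_Icc_sub_eq_eval_descPochhammer {R : Type*} [CommRing R] (n : ℕ) (w : R) :
    ∏ j ∈ Icc 1 n, (w - j) = (descPochhammer R n).eval (w - 1) := by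
  induction n with
  | zero => simp
  | succ n ih =>
    rw [prod_Icc_succ_top (Nat.le_add_left 1 n), ih, descPochhammer_succ_eval, Nat.cast_succ,
      sub_sub, add_comm (n : R)]

lemma hasDerivAt_zernikeR (d ℓ k : ℕ) (r : ℝ) :
    HasDerivAt (zernikeR d ℓ k)
      (√(2 * ℓ + 4 * k + d) * ∑ s ∈ range (k + 1),
        (-1 : ℝ) ^ s * k.choose s * (k.factorial : ℝ)⁻¹ *
          (∏ j ∈ Icc 1 k, (ℓ + 2 * k - s - j + d / 2 : ℝ)) *
          ((ℓ + 2 * (k - s) : ℕ) * r ^ (ℓ + 2 * (k - s) - 1))) r :=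
  HasDerivAt.const_mul _ (HasDerivAt.fun_sum fun _ _ => (hasDerivAt_pow _ r).const_mul _)

open fwdDiff in
lemma deriv_zernikeR_one_eq_fwdDiff_iter (d ℓ k : ℕ) :
    deriv (zernikeR d ℓ k) 1 = √(2 * ℓ + 4 * k + d) * ((k.factorial : ℝ)⁻¹ *
      (Δ_[1])^[k] (fun z => (2 * z + (2 - ℓ - 2 * k - d)) * (descPochhammer ℝ k).eval z)
        (ℓ + k + d / 2 - 1)) := by
  rw [(hasDerivAt_zernikeR d ℓ k 1).deriv, fwdDiff_iter_eq_sum_shift_reflect]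
  congr 1
  rw [mul_sum]
  refine sum_congr rfl fun s hs => ?_
  have hsk : s ≤ k := mem_range_succ_iff.mp hs
  have hprod : ∏ j ∈ Icc 1 k, (ℓ + 2 * k - s - j + d / 2 : ℝ) =
      (descPochhammer ℝ k).eval (ℓ + k + d / 2 - 1 + (k - s) : ℝ) := by
    convert prod_Icc_sub_eq_eval_descPochhammer k (ℓ + 2 * k - s + d / 2 : ℝ) using 2 <;> ring
  rw [hprod, one_pow, nsmul_one, zsmul_eq_mul]
  push_cast [Nat.cast_sub hsk]
  ring

lemma deriv_zernikeR_one (d ℓ k : ℕ) :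
    deriv (zernikeR d ℓ k) 1 =
      √(2 * ℓ + 4 * k + d) * (ℓ + 2 * k * (k + ℓ + d / 2)) := by
  rw [deriv_zernikeR_one_eq_fwdDiff_iter, fwdDiff_iter_mul_add_mul_eval_descPochhammer,
    inv_mul_cancel_left₀ (by positivity)]
  ring

theorem zernikeR_deriv_one_pos_general (d ℓ k : ℕ) :
    (¬(ℓ = 0 ∧ k = 0) → 0 < deriv (zernikeR d ℓ k) 1) ∧
    (∀ r : ℝ, zernikeR d 0 0 r = Real.sqrt d) := by
  refine ⟨fun hne => ?_, fun r => by simp [zernikeR]⟩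
  rw [deriv_zernikeR_one]
  rcases not_and_or.mp hne with hℓ | hk
  · have : 0 < ℓ := Nat.pos_of_ne_zero hℓ
    positivity
  · have : 0 < k := Nat.pos_of_ne_zero hk
    positivity

/-- For `(ℓ,k) ≠ (0,0)` the derivative of the radial Zernike polynomial
at the right endpoint is strictly positive, `R_{ℓ,k}'(1) > 0`; moreover `R_{0,0}` is the
constant function `√d`. -/
theorem zernikeR_deriv_one_pos (d ℓ k : ℕ) (hd : 2 ≤ d) :
    (¬(ℓ = 0 ∧ k = 0) → 0 < deriv (zernikeR d ℓ k) 1) ∧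
    (∀ r : ℝ, zernikeR d 0 0 r = Real.sqrt d) :=
  zernikeR_deriv_one_pos_general d ℓ k
end

section
/- Let d ≥ 2 be an integer and let ℓ, p ≥ 0 and 0 ≤ k ≤ p be integers. Then the weighted inner product of the monomial r^{ℓ+2p} with the radial Zernike polynomial R_{ℓ,k} is ∫₀¹ r^{ℓ+2p} · R_{ℓ,k}(r) · r^{d−1} dr = χ_{ℓ,k,p}, where χ_{ℓ,k,p} = (√(2ℓ+4k+d) / (2p+2ℓ+2k+d)) · binom(p,k) · k! / ∏_{j=1}^{k} (p+ℓ+k−j+d/2), with the empty product (for k = 0) equal to 1. -/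
/-!
Write `(z)_k` for the rising factorial. Up to a constant, `R_{ℓ,k}` is
`∑ₜ (-1)ᵗ binom(k,t) (ℓ + d/2 + t)_k r^{ℓ+2t}`, so integrating termwise against `r ^ m` gives
`∑ₜ (-1)ᵗ binom(k,t) Q(t) / (y + t)` with `Q(t) = (ℓ + d/2 + t)_k` and `y = (m + ℓ + 1) / 2`. As
`deg Q ≤ k`, this is the partial fraction expansion of `k! Q(-y) / (y)_{k+1}`, that is, Lagrange
interpolation of `Q` at the nodes `0, …, k`. For `m = ℓ + 2p + d - 1` the numerator is
`Q(-y) = (-p)_k = (-1)ᵏ binom(p,k) k!`.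
-/

open Finset

/-- The expansion coefficient `χ_{ℓ,k,p}`. -/
noncomputable def zernikeChi (d ℓ k p : ℕ) : ℝ :=
  Real.sqrt (2 * ℓ + 4 * k + d) / (2 * p + 2 * ℓ + 2 * k + d) * (p.choose k : ℝ) *
    (k.factorial : ℝ) / ∏ j ∈ Finset.Icc 1 k, ((p : ℝ) + ℓ + k - j + d / 2)

open Polynomial

section PartialFractions

theorem prod_range_erase_natCast_sub {R : Type*} [CommRing R] (i m : ℕ) :
    ∏ j ∈ (range (i + 1 + m)).erase i, ((i : R) - j) = (-1) ^ m * i.factorial * m.factorial := by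
  induction m with
  | zero =>
    rw [add_zero, range_add_one, erase_insert notMem_range_self,
      ← descPochhammer_eval_eq_prod_range, descPochhammer_eval_eq_descFactorial,
      Nat.descFactorial_self]
    simp only [pow_zero, one_mul, Nat.factorial_zero, Nat.cast_one, mul_one]
  | succ m ih =>
    rw [← add_assoc, range_add_one, erase_insert_of_ne (by omega), prod_insert (by simp), ih,
      Nat.factorial_succ]
    push_cast
    ring

theorem nodal_range_natCast {R : Type*} [CommRing R] (n : ℕ) :
    Lagrange.nodal (range n) (fun j : ℕ ↦ (j : R)) = descPochhammer R n := by
  induction n with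
  | zero => simp only [range_zero, Lagrange.nodal_empty, descPochhammer_zero]
  | succ n ih =>
    rw [range_add_one, Lagrange.nodal_insert_eq_nodal notMem_range_self, ih,
      descPochhammer_succ_right, map_natCast, mul_comm]

theorem descPochhammer_eval_neg {R : Type*} [Ring R] (n : ℕ) (y : R) :
    (descPochhammer R n).eval (-y) = (-1) ^ n * (ascPochhammer R n).eval y := by
  rw [← neg_neg y, ascPochhammer_eval_neg_eq_descPochhammer, neg_neg, ← mul_assoc, ← pow_add,
    Even.neg_one_pow ⟨n, rfl⟩, one_mul]

variable {F : Type*} [Field F]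

theorem sum_nodalWeight_mul_eval_div_sub {ι : Type*} [DecidableEq ι] {s : Finset ι} {v : ι → F}
    (hv : Set.InjOn v s) {P : F[X]} (hP : P.degree < #s) {x : F} (hx : ∀ i ∈ s, x ≠ v i) :
    ∑ i ∈ s, Lagrange.nodalWeight s v i * P.eval (v i) / (x - v i)
      = P.eval x / (Lagrange.nodal s v).eval x := by
  conv_rhs => rw [Lagrange.eq_interpolate hv hP, Lagrange.eval_interpolate_not_at_node _ hx]
  rw [mul_div_cancel_left₀ _ (Lagrange.eval_nodal_not_at_node hx)]
  exact sum_congr rfl fun i _ ↦ by rw [div_eq_mul_inv, mul_right_comm]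

variable [CharZero F]

theorem nodalWeight_range_natCast {k i : ℕ} (hi : i ≤ k) :
    Lagrange.nodalWeight (range (k + 1)) (fun j : ℕ ↦ (j : F)) i
      = (-1) ^ (k - i) * k.choose i / k.factorial := by
  obtain ⟨m, rfl⟩ := Nat.exists_eq_add_of_le hi
  have hi₀ : (i.factorial : F) ≠ 0 := mod_cast i.factorial_ne_zero
  have hm₀ : (m.factorial : F) ≠ 0 := mod_cast m.factorial_ne_zero
  have him₀ : ((i + m).factorial : F) ≠ 0 := mod_cast (i + m).factorial_ne_zero
  rw [Lagrange.nodalWeight, prod_inv_distrib, add_right_comm, prod_range_erase_natCast_sub,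
    Nat.cast_add_choose, Nat.add_sub_cancel_left, mul_assoc, mul_inv, ← inv_pow, inv_neg_one]
  field_simp

theorem alternating_sum_choose_mul_eval_div_add {k : ℕ} {Q : F[X]} (hQ : Q.natDegree ≤ k) {y : F}
    (hy : ∀ t ∈ range (k + 1), y + t ≠ 0) :
    ∑ t ∈ range (k + 1), (-1) ^ t * (k.choose t : F) * Q.eval (t : F) / (y + t)
      = k.factorial * Q.eval (-y) / (ascPochhammer F (k + 1)).eval y := by
  have hk₀ : (k.factorial : F) ≠ 0 := mod_cast k.factorial_ne_zero
  have hnode : ∀ t ∈ range (k + 1), -y ≠ (t : F) := fun t ht ↦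
    mt neg_eq_iff_add_eq_zero.mp (hy t ht)
  have hdeg : Q.degree < #(range (k + 1)) := by
    rw [card_range]
    exact (degree_le_of_natDegree_le hQ).trans_lt (mod_cast k.lt_succ_self)
  have hsq : ((-1 : F) ^ k) ^ 2 = 1 := by rw [pow_right_comm, neg_one_sq, one_pow]
  calc
    _ = (-1) ^ (k + 1) * k.factorial * ∑ t ∈ range (k + 1),
          Lagrange.nodalWeight (range (k + 1)) (fun j : ℕ ↦ (j : F)) t * Q.eval (t : F) /
            (-y - t) := by
      rw [mul_sum]
      refine sum_congr rfl fun t ht ↦ ?_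
      have htk : t ≤ k := Nat.lt_succ_iff.mp (mem_range.mp ht)
      have hyt : y + t ≠ 0 := hy t ht
      rw [nodalWeight_range_natCast htk, pow_sub₀ _ (neg_ne_zero.mpr one_ne_zero) htk, ← inv_pow,
        inv_neg_one, ← neg_add', div_neg]
      field_simp
      linear_combination (-k.choose t * Q.eval (t : F)) * hsq
    _ = (-1) ^ (k + 1) * k.factorial *
          (Q.eval (-y) / ((-1) ^ (k + 1) * (ascPochhammer F (k + 1)).eval y)) := by
      rw [sum_nodalWeight_mul_eval_div_sub Nat.cast_injective.injOn hdeg hnode,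
        nodal_range_natCast, descPochhammer_eval_neg]
    _ = k.factorial * Q.eval (-y) / (ascPochhammer F (k + 1)).eval y := by
      field_simp

theorem alternating_sum_choose_mul_ascPochhammer_div_add (k : ℕ) (b : F) {y : F}
    (hy : ∀ t ∈ range (k + 1), y + t ≠ 0) :
    ∑ t ∈ range (k + 1), (-1) ^ t * (k.choose t : F) * (ascPochhammer F k).eval (b + t) / (y + t)
      = k.factorial * (ascPochhammer F k).eval (b - y) / (ascPochhammer F (k + 1)).eval y := by
  have hdeg : ((ascPochhammer F k).comp (C b + X)).natDegree ≤ k := by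
    rw [natDegree_comp, ascPochhammer_natDegree, natDegree_C_add, natDegree_X, mul_one]
  simpa only [eval_comp, eval_add, eval_C, eval_X, ← sub_eq_add_neg]
    using alternating_sum_choose_mul_eval_div_add hdeg hy

end PartialFractions

theorem prod_Icc_one_sub_natCast {R : Type*} [CommRing R] (k : ℕ) (x : R) :
    ∏ j ∈ Icc 1 k, (x - j) = (ascPochhammer R k).eval (x - k) := by
  induction k with
  | zero => simp
  | succ k ih =>
    rw [prod_Icc_succ_top (Nat.le_add_left 1 k), ih, ascPochhammer_succ_left, eval_mul, eval_X,
      eval_comp, eval_add, eval_X, eval_one, mul_comm, Nat.cast_succ, ← sub_sub, sub_add_cancel]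

theorem zernikeR_eq_sum_ascPochhammer (d ℓ k : ℕ) (r : ℝ) :
    zernikeR d ℓ k r = (-1) ^ k * √(2 * ℓ + 4 * k + d) / k.factorial *
      ∑ t ∈ range (k + 1), (-1) ^ t * (k.choose t : ℝ) *
        (ascPochhammer ℝ k).eval (ℓ + d / 2 + t : ℝ) * r ^ (ℓ + 2 * t) := by
  rw [zernikeR, ← sum_range_reflect, mul_sum, mul_sum]
  refine sum_congr rfl fun t ht ↦ ?_
  have htk : t ≤ k := Nat.lt_succ_iff.mp (mem_range.mp ht)
  have hprod : ∏ j ∈ Icc 1 k, ((ℓ : ℝ) + 2 * k - (k - t : ℕ) - j + d / 2)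
      = (ascPochhammer ℝ k).eval (ℓ + d / 2 + t : ℝ) := by
    simp_rw [sub_add_eq_add_sub _ _ (_ / _ : ℝ)]
    rw [prod_Icc_one_sub_natCast, Nat.cast_sub htk]
    ring_nf
  have hsign : (-1 : ℝ) ^ (k - t) = (-1) ^ k * (-1) ^ t := by
    rw [pow_sub₀ _ (neg_ne_zero.mpr one_ne_zero) htk, ← inv_pow, inv_neg_one]
  rw [show k + 1 - 1 - t = k - t from rfl, Nat.sub_sub_self htk, Nat.choose_symm htk, hprod, hsign]
  ring

theorem zernikeChi_eq_div_ascPochhammer (d ℓ k p : ℕ) :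
    zernikeChi d ℓ k p = √(2 * ℓ + 4 * k + d) / 2 * (k.factorial * p.choose k) /
      (ascPochhammer ℝ (k + 1)).eval (p + ℓ + d / 2 : ℝ) := by
  have hprod : ∏ j ∈ Icc 1 k, ((p : ℝ) + ℓ + k - j + d / 2)
      = (ascPochhammer ℝ k).eval (p + ℓ + d / 2 : ℝ) := by
    simp_rw [sub_add_eq_add_sub]
    rw [prod_Icc_one_sub_natCast]
    ring_nf
  rw [zernikeChi, hprod, ascPochhammer_succ_eval,
    show (2 * p + 2 * ℓ + 2 * k + d : ℝ) = 2 * (p + ℓ + d / 2 + k) by ring]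
  simp only [div_eq_mul_inv, mul_inv]
  ring

theorem integral_pow_mul_zernikeR (d ℓ k m : ℕ) :
    ∫ r in (0 : ℝ)..1, r ^ m * zernikeR d ℓ k r
      = (-1) ^ k * √(2 * ℓ + 4 * k + d) / 2 *
        (ascPochhammer ℝ k).eval (ℓ + d / 2 - (m + ℓ + 1) / 2 : ℝ) /
          (ascPochhammer ℝ (k + 1)).eval ((m + ℓ + 1) / 2 : ℝ) := by
  have hk₀ : (k.factorial : ℝ) ≠ 0 := mod_cast k.factorial_ne_zero
  have hterm (t : ℕ) (a : ℝ) :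
      ∫ r in (0 : ℝ)..1, r ^ m * (a * r ^ (ℓ + 2 * t)) = a / ((m + ℓ + 1) / 2 + t) / 2 := by
    simp_rw [mul_left_comm _ a, ← pow_add]
    rw [intervalIntegral.integral_const_mul, integral_pow, one_pow, zero_pow (Nat.succ_ne_zero _)]
    push_cast
    field_simp
    ring
  simp_rw [zernikeR_eq_sum_ascPochhammer, mul_left_comm (_ ^ m), mul_sum (range (k + 1)) _ (_ ^ m)]
  rw [intervalIntegral.integral_const_mul, intervalIntegral.integral_finsetSum
    fun t _ ↦ (by fun_prop : Continuous _).intervalIntegrable _ _]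
  simp_rw [hterm]
  rw [← sum_div, alternating_sum_choose_mul_ascPochhammer_div_add k _ fun t _ ↦ by positivity]
  field_simp

theorem monomial_inner_zernikeR_general (d ℓ p k : ℕ) (hd : 1 ≤ d) :
    ∫ r in (0 : ℝ)..1, r ^ (ℓ + 2 * p) * zernikeR d ℓ k r * r ^ (d - 1) = zernikeChi d ℓ k p := by
  have hy : (((ℓ + 2 * p + (d - 1) : ℕ) : ℝ) + ℓ + 1) / 2 = p + ℓ + d / 2 := by
    push_cast [Nat.cast_sub hd]
    ring
  have hnum : (ascPochhammer ℝ k).eval (-p : ℝ) = (-1) ^ k * (k.factorial * p.choose k) := by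
    rw [ascPochhammer_eval_neg_eq_descPochhammer, descPochhammer_eval_eq_descFactorial,
      Nat.descFactorial_eq_factorial_mul_choose, Nat.cast_mul]
  have hsq : (-1 : ℝ) ^ k * (-1) ^ k = 1 := by rw [← pow_add, Even.neg_one_pow ⟨k, rfl⟩]
  simp_rw [mul_right_comm _ (zernikeR d ℓ k _), ← pow_add]
  rw [integral_pow_mul_zernikeR, hy, zernikeChi_eq_div_ascPochhammer,
    show (ℓ + d / 2 - (p + ℓ + d / 2) : ℝ) = -p by ring, hnum]
  congr 1
  linear_combination √(2 * ℓ + 4 * k + d) / 2 * (k.factorial * p.choose k) * hsq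

/-- For `0 ≤ k ≤ p`, the weighted inner product of the monomial
`r^{ℓ+2p}` with the radial Zernike polynomial `R_{ℓ,k}` equals `χ_{ℓ,k,p}`. -/
theorem monomial_inner_zernikeR (d ℓ p k : ℕ) (hd : 2 ≤ d) (hk : k ≤ p) :
    ∫ r in (0:ℝ)..1, r ^ (ℓ + 2 * p) * zernikeR d ℓ k r * r ^ (d - 1)
      = zernikeChi d ℓ k p :=
  monomial_inner_zernikeR_general d ℓ p k (one_le_two.trans hd)
end
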